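/- For every L > 0 there exists λ₀ > 0 such that for every λ ∈ (0, λ₀] there exists a C^∞ function k : ℝ² → ℝ solving the kernel model (kEq) with parameter λ that additionally satisfies λ - (1/2) ∫_0^L (∂_y k)(x,0)² dx > 0. -/

import Mathlib

open MeasureTheory Real

/-- Partial derivative in the first variable. -/
noncomputable def pd1 (f : ℝ × ℝ → ℝ) : ℝ × ℝ → ℝ := fun q => deriv (fun s => f (s, q.2)) q.1

/-- Partial derivative in the second variable. -/
noncomputable def pd2 (f : ℝ × ℝ → ℝ) : ℝ × ℝ → ℝ := fun q => deriv (fun s => f (q.1, s)) q.2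

/-- `k` solves the kernel model (kEq) with parameter `lam` on the triangle `Δ_L`. -/
def SolvesKEq (L lam : ℝ) (k : ℝ × ℝ → ℝ) : Prop :=
  (∀ x y : ℝ, 0 ≤ y → y ≤ x → x ≤ L →
      pd1 (pd1 (pd1 k)) (x, y) + pd2 (pd2 (pd2 k)) (x, y) + pd2 k (x, y) + pd1 k (x, y)
        = -lam * k (x, y)) ∧
  (∀ x : ℝ, 0 ≤ x → x ≤ L → k (x, x) = 0) ∧
  (∀ x : ℝ, 0 ≤ x → x ≤ L → k (x, 0) = 0) ∧
  (∀ x : ℝ, 0 ≤ x → x ≤ L → pd1 k (x, x) = lam * x / 3)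

open scoped BoundedContinuousFunction

namespace KEq

/-- Bounded double sequences. -/
def E : Type := (ℕ × ℕ) →ᵇ ℝ

noncomputable instance : NormedAddCommGroup E :=
  inferInstanceAs (NormedAddCommGroup ((ℕ × ℕ) →ᵇ ℝ))

noncomputable instance : NormedSpace ℝ E :=
  inferInstanceAs (NormedSpace ℝ ((ℕ × ℕ) →ᵇ ℝ))

instance : CompleteSpace E := inferInstanceAs (CompleteSpace ((ℕ × ℕ) →ᵇ ℝ))

instance : CoeFun E (fun _ => ℕ × ℕ → ℝ) := ⟨fun v => (v : (ℕ × ℕ) →ᵇ ℝ).toFun⟩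

lemma E_ext (v w : E) (h : ∀ m n, v (m, n) = w (m, n)) : v = w :=
  BoundedContinuousFunction.ext (f := v) (g := w) fun p => h p.1 p.2

lemma E_add_apply (v w : E) (p : ℕ × ℕ) : (v + w) p = v p + w p := rfl

lemma E_smul_apply (c : ℝ) (v : E) (p : ℕ × ℕ) : (c • v) p = c * v p := rfl

/-- The algebra of bounded operators on `E`. -/
abbrev Op := E →L[ℝ] E

/-- Reindexing as a bounded operator. -/
noncomputable def shift (g : ℕ × ℕ → ℕ × ℕ) : Op :=
  LinearMap.mkContinuous
    { toFun := fun v => (BoundedContinuousFunction.compContinuous v ⟨g, continuous_of_discreteTopology⟩ : (ℕ × ℕ) →ᵇ ℝ)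
      map_add' := fun _ _ => rfl
      map_smul' := fun _ _ => rfl } 1 (by
    intro v
    rw [one_mul]
    refine (BoundedContinuousFunction.norm_le (norm_nonneg _)).2 ?_
    intro p
    exact BoundedContinuousFunction.norm_coe_le_norm v (g p))

@[simp] lemma shift_apply (g : ℕ × ℕ → ℕ × ℕ) (v : E) (p : ℕ × ℕ) : shift g v p = v (g p) := rfl

/-- The operator representing the `x`-derivative. -/
noncomputable def A : Op := (2:ℝ) • shift (fun p => (p.1 + 1, p.2))

/-- The operator representing the derivative along the diagonal. -/
noncomputable def S : Op := shift (fun p => (p.1, p.2 + 1))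

/-- The operator representing the `y`-derivative. -/
noncomputable def B : Op := S - A

lemma A_apply (v : E) (m n : ℕ) : A v (m, n) = 2 * v (m + 1, n) := rfl
lemma S_apply (v : E) (m n : ℕ) : S v (m, n) = v (m, n + 1) := rfl
lemma B_apply (v : E) (m n : ℕ) : B v (m, n) = v (m, n + 1) - 2 * v (m + 1, n) := rfl

lemma comm_AS : Commute A S := by
  refine ContinuousLinearMap.ext fun v => ?_
  exact E_ext _ _ fun m n => rfl

lemma comm_AB : Commute A B := comm_AS.sub_right (Commute.refl A)

/-- Evaluation at the origin. -/
noncomputable def ev : E →L[ℝ] ℝ := (BoundedContinuousFunction.evalCLM ℝ ((0, 0) : ℕ × ℕ) :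
  ((ℕ × ℕ) →ᵇ ℝ) →L[ℝ] ℝ)

lemma ev_apply (v : E) : ev v = v (0, 0) := rfl

/-- The function with Taylor data `v`. -/
noncomputable def K (v : E) : ℝ × ℝ → ℝ := fun q =>
  ev ((NormedSpace.exp (q.1 • A) * NormedSpace.exp (q.2 • B)) v)

lemma K_contDiff (v : E) : ContDiff ℝ (⊤ : ℕ∞) (K v) := by
  have he : ContDiff ℝ (⊤ : ℕ∞) (NormedSpace.exp : Op → Op) := contDiff_iff_contDiffAt.2 fun T =>
    (NormedSpace.exp_analytic (𝕂 := ℝ) T).contDiffAt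
  have h1 : ContDiff ℝ (⊤ : ℕ∞) (fun q : ℝ × ℝ => NormedSpace.exp (q.1 • A)) :=
    he.comp (contDiff_fst.smul contDiff_const)
  have h2 : ContDiff ℝ (⊤ : ℕ∞) (fun q : ℝ × ℝ => NormedSpace.exp (q.2 • B)) :=
    he.comp (contDiff_snd.smul contDiff_const)
  exact ev.contDiff.comp ((h1.mul h2).clm_apply contDiff_const)

lemma pd1_K (v : E) : pd1 (K v) = K (A v) := by
  funext q
  have h := hasDerivAt_exp_smul_const (𝕂 := ℝ) A q.1
  have h2 := ((h.mul_const (NormedSpace.exp (q.2 • B))).clm_apply (hasDerivAt_const q.1 v))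
  have h3 := ev.hasFDerivAt.comp_hasDerivAt q.1 h2
  have hc : A * NormedSpace.exp (q.2 • B) = NormedSpace.exp (q.2 • B) * A :=
    (comm_AB.smul_right q.2).exp_right
  refine h3.deriv.trans ?_
  rw [mul_assoc, hc]
  simp [K]

lemma pd2_K (v : E) : pd2 (K v) = K (B v) := by
  funext q
  have h := hasDerivAt_exp_smul_const (𝕂 := ℝ) B q.2
  have h2 := ((h.const_mul (NormedSpace.exp (q.1 • A))).clm_apply (hasDerivAt_const q.2 v))
  have h3 := ev.hasFDerivAt.comp_hasDerivAt q.2 h2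
  refine h3.deriv.trans ?_
  simp [K]

lemma K_add (v w : E) (q : ℝ × ℝ) : K (v + w) q = K v q + K w q := by simp [K]
lemma K_smul (c : ℝ) (v : E) (q : ℝ × ℝ) : K (c • v) q = c * K v q := by simp [K]

lemma hasSum_exp (T : Op) (v : E) (x : ℝ) :
    HasSum (fun n : ℕ => ((n.factorial : ℝ)⁻¹ * x ^ n) * ev ((T ^ n) v))
      (ev (NormedSpace.exp (x • T) v)) := by
  have h := NormedSpace.exp_series_hasSum_exp' (𝕂 := ℝ) (x • T)
  have h2 := (h.mapL (ContinuousLinearMap.apply ℝ E v)).mapL ev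
  refine (congrArg (fun f => HasSum f _) (funext fun n => ?_)).mpr h2
  rw [smul_pow, smul_smul, map_smul, map_smul]
  rfl

lemma K_diag (v : E) (x : ℝ) : K v (x, x) = ev (NormedSpace.exp (x • S) v) := by
  letI : NormedAlgebra ℚ Op := NormedAlgebra.restrictScalars ℚ ℝ Op
  have : x • S = x • A + x • B := by rw [← smul_add]; simp [B]
  rw [this, NormedSpace.exp_add_of_commute ((comm_AB.smul_left x).smul_right x)]
  rfl

lemma K_axis (v : E) (x : ℝ) : K v (x, 0) = ev (NormedSpace.exp (x • A) v) := by
  simp [K]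

lemma S_pow (n : ℕ) (v : E) (i j : ℕ) : (S ^ n) v (i, j) = v (i, j + n) := by
  induction n generalizing v with
  | zero => rfl
  | succ n ih =>
    rw [pow_succ, mul_apply_eq_comp, ih, S_apply]; rfl

lemma A_pow (n : ℕ) (v : E) (i j : ℕ) : (A ^ n) v (i, j) = 2 ^ n * v (i + n, j) := by
  induction n generalizing v with
  | zero => simp
  | succ n ih =>
    rw [pow_succ, mul_apply_eq_comp, ih, A_apply, pow_succ, mul_assoc]; rfl

/-- Taylor coefficients of the kernel in the variables `(x - y, y)`. -/
noncomputable def b (lam : ℝ) : ℕ → ℕ → ℝ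
  | 0, _ => 0
  | 1, n => if n = 1 then lam / 3 else 0
  | _ + 2, 0 => 0
  | m + 2, n + 1 => b lam (m + 1) (n + 2) - 1 / 3 * b lam m (n + 3) - 1 / 3 * b lam m (n + 1)
      - lam / 3 * b lam m n

lemma b_col (lam : ℝ) (m : ℕ) : b lam m 0 = 0 := by
  rcases m with _ | _ | m <;> simp [b]

lemma b_bound (lam : ℝ) (h0 : 0 < lam) (h1 : lam ≤ 1) (m : ℕ) :
    (∀ n, |b lam m n| ≤ lam * 2 ^ m) ∧ (∀ n, |b lam (m + 1) n| ≤ lam * 2 ^ (m + 1)) := by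
  induction m with
  | zero =>
    refine ⟨fun n => by simp [b, h0.le], fun n => ?_⟩
    simp only [zero_add, b]
    split_ifs
    · rw [abs_of_pos (by positivity)]; linarith
    · simp [h0.le]
  | succ m ih =>
    refine ⟨ih.2, fun n => ?_⟩
    have hp : 0 ≤ lam * 2 ^ m := by positivity
    rcases n with _ | n
    · rw [b_col]; simp; positivity
    · have e1 := abs_le.1 (ih.2 (n + 2))
      have e2 := abs_le.1 (ih.1 (n + 3))
      have e3 := abs_le.1 (ih.1 (n + 1))
      have e4 : |lam * b lam m n| ≤ lam * 2 ^ m := by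
        rw [abs_mul, abs_of_pos h0]
        calc lam * |b lam m n| ≤ 1 * |b lam m n| := by gcongr
          _ ≤ _ := by rw [one_mul]; exact ih.1 n
      have e5 := abs_le.1 e4
      have : b lam (m + 1 + 1) (n + 1) = b lam (m + 1) (n + 2) - 1 / 3 * b lam m (n + 3)
        - 1 / 3 * b lam m (n + 1) - lam / 3 * b lam m n := by rw [b]
      rw [this, abs_le]
      rw [pow_succ] at e1 ⊢
      rw [pow_succ]
      constructor <;> nlinarith

/-- The normalized coefficients as an element of `E`. -/
lemma exists_beta (lam : ℝ) (h0 : 0 < lam) (h1 : lam ≤ 1) :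
    ∃ β : E, ‖β‖ ≤ lam ∧ ∀ m n, β (m, n) = b lam m n / 2 ^ m := by
  have hb : ∀ p : ℕ × ℕ, ‖b lam p.1 p.2 / 2 ^ p.1‖ ≤ lam := by
    intro p
    rw [Real.norm_eq_abs, abs_div, abs_of_pos (by positivity : (0:ℝ) < 2 ^ p.1),
      div_le_iff₀ (by positivity)]
    exact (b_bound lam h0 h1 p.1).1 p.2
  refine ⟨BoundedContinuousFunction.ofNormedAddCommGroupDiscrete
    (fun p : ℕ × ℕ => b lam p.1 p.2 / 2 ^ p.1) lam hb, ?_, fun m n => rfl⟩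
  exact (BoundedContinuousFunction.norm_le h0.le).2 hb

lemma beta_eq (lam : ℝ) (β : E) (hβ : ∀ m n, β (m, n) = b lam m n / 2 ^ m) :
    A (A (A β)) + B (B (B β)) + B β + A β = (-lam) • β := by
  refine E_ext _ _ fun m n => ?_
  simp only [E_add_apply, E_smul_apply, A_apply,
    B_apply, hβ]
  have : b lam (m + 1 + 1) (n + 1) = b lam (m + 1) (n + 2) - 1 / 3 * b lam m (n + 3)
        - 1 / 3 * b lam m (n + 1) - lam / 3 * b lam m n := by rw [b]
  simp only [add_assoc] at this ⊢
  norm_num at this ⊢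
  rw [this]
  simp only [pow_add]
  field_simp
  ring

lemma exp_bound (L : ℝ) : ∃ C : ℝ, 0 ≤ C ∧ ∀ x ∈ Set.Icc (0:ℝ) L, ∀ v : E,
    |K (B v) (x, 0)| ≤ C * ‖v‖ := by
  letI : NormedAlgebra ℚ Op := NormedAlgebra.restrictScalars ℚ ℝ Op
  have he : Continuous (NormedSpace.exp : Op → Op) := NormedSpace.exp_continuous
  have hc : Continuous (fun x : ℝ => ev.comp ((NormedSpace.exp (x • A)).comp B)) := by
    have : Continuous (fun x : ℝ => NormedSpace.exp (x • A)) := by fun_prop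
    exact continuous_const.clm_comp (this.clm_comp continuous_const)
  obtain ⟨C, hC⟩ := (isCompact_Icc (a := (0:ℝ)) (b := L)).exists_bound_of_continuousOn
    hc.continuousOn
  refine ⟨|C|, abs_nonneg _, fun x hx v => ?_⟩
  rw [K_axis]
  exact (ContinuousLinearMap.le_of_opNorm_le _ ((hC x hx).trans (le_abs_self C)) v)

end KEq

open KEq in
theorem stmt_12 (L : ℝ) (hL : 0 < L) :
    ∃ lam₀ : ℝ, 0 < lam₀ ∧ ∀ lam : ℝ, 0 < lam → lam ≤ lam₀ →
      ∃ k : ℝ × ℝ → ℝ, ContDiff ℝ (⊤ : ℕ∞) k ∧ SolvesKEq L lam k ∧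
        0 < lam - (1 / 2) * ∫ x in (0:ℝ)..L, (pd2 k (x, 0)) ^ 2 := by
  obtain ⟨C, hC0, hC⟩ := exp_bound L
  refine ⟨min 1 (1 / (C ^ 2 * L + 1)), by positivity, fun lam h0 hle => ?_⟩
  have h1 : lam ≤ 1 := hle.trans (min_le_left _ _)
  have h2 : lam ≤ 1 / (C ^ 2 * L + 1) := hle.trans (min_le_right _ _)
  obtain ⟨β, hn, hβ⟩ := exists_beta lam h0 h1
  refine ⟨K β, K_contDiff β, ⟨?_, ?_, ?_, ?_⟩, ?_⟩
  · intro x y _ _ _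
    simp only [pd1_K, pd2_K]
    rw [← K_add, ← K_add, ← K_add, beta_eq lam β hβ, K_smul]
  · intro x _ _
    rw [K_diag]
    refine (hasSum_exp S β x).unique ?_
    convert hasSum_zero with n
    rw [ev_apply, S_pow, hβ]
    simp [b]
  · intro x _ _
    rw [K_axis]
    refine (hasSum_exp A β x).unique ?_
    convert hasSum_zero with n
    rw [ev_apply, A_pow, hβ, b_col]
    simp
  · intro x _ _
    rw [pd1_K, K_diag]
    refine (hasSum_exp S (A β) x).unique ?_
    have : lam * x / 3 = (((Nat.factorial 1 : ℕ) : ℝ)⁻¹ * x ^ 1) * ev ((S ^ 1) (A β)) := by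
      rw [ev_apply, S_pow, A_apply, hβ]
      simp [b]; ring
    rw [this]
    refine hasSum_single 1 fun n hn => ?_
    rw [ev_apply, S_pow, A_apply, hβ]
    simp [b, hn]
  · have hI : ‖∫ x in (0:ℝ)..L, (pd2 (K β) (x, 0)) ^ 2‖ ≤ (C * lam) ^ 2 * |L - 0| := by
      refine intervalIntegral.norm_integral_le_of_norm_le_const fun x hx => ?_
      rw [Set.uIoc_of_le hL.le] at hx
      rw [pd2_K, norm_pow, Real.norm_eq_abs]
      gcongr
      exact (hC x ⟨hx.1.le, hx.2⟩ β).trans (by gcongr)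
    rw [sub_zero, abs_of_pos hL] at hI
    have h3 := (le_abs_self _).trans hI
    rw [le_div_iff₀ (by positivity)] at h2
    nlinarith
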